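/- Let S be a finite p-group acting on Λ by algebra automorphisms, where p = char k, and E = {e_1,...,e_n} a complete set of primitive orthogonal idempotents of Λ closed under the action of S, and suppose S acts freely on E. Then a finitely generated ΛS-module M is projective (respectively, injective) if and only if its restriction to Λ is a projective (respectively, injective) Λ-module; in particular, ΛS is self-injective if and only if Λ is self-injective. -/

import Mathlib

set_option maxHeartbeats 1000000
set_option linter.unusedSectionVars false
set_option linter.unusedVariables false

noncomputable section
open Finset
open scoped Classical


section CoreSGA

variable {k : Type} [CommRing k] {Λ : Type} [Ring Λ] [Algebra k Λ]
variable {G : Type} [Group G] [Fintype G]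

/-- The skew group algebra `Λ ⊗_k kG` (as functions `G → Λ`), with multiplication
`(λ ⊗ g) ⬝ (μ ⊗ h) = λ · g(μ) ⊗ gh`. -/
structure SGA (σ : G →* (Λ ≃ₐ[k] Λ)) : Type where
  toFun : G → Λ

namespace SGA

variable {σ : G →* (Λ ≃ₐ[k] Λ)}

@[simp] lemma mk_toFun (f : G → Λ) : (SGA.mk f : SGA σ).toFun = f := rfl

@[ext] lemma ext {f h : SGA σ} (w : ∀ g, f.toFun g = h.toFun g) : f = h := by
  cases f; cases h; simp only [mk.injEq]; funext g; exact w g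

/-- The underlying-function equivalence. -/
def equivFun : SGA σ ≃ (G → Λ) := ⟨toFun, mk, fun _ => rfl, fun _ => rfl⟩

instance : AddCommGroup (SGA σ) := (equivFun (σ := σ)).addCommGroup

@[simp] lemma toFun_add (f h : SGA σ) (g : G) : (f + h).toFun g = f.toFun g + h.toFun g := rfl
@[simp] lemma toFun_zero (g : G) : (0 : SGA σ).toFun g = 0 := rfl
@[simp] lemma toFun_neg (f : SGA σ) (g : G) : (-f).toFun g = -(f.toFun g) := rfl

instance : Mul (SGA σ) :=
  ⟨fun f h => ⟨fun x => ∑ g : G, f.toFun g * σ g (h.toFun (g⁻¹ * x))⟩⟩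

instance : One (SGA σ) := ⟨⟨fun x => if x = 1 then 1 else 0⟩⟩

@[simp] lemma toFun_mul (f h : SGA σ) (x : G) :
    (f * h).toFun x = ∑ g : G, f.toFun g * σ g (h.toFun (g⁻¹ * x)) := rfl

lemma toFun_one (x : G) : (1 : SGA σ).toFun x = if x = 1 then 1 else 0 := rfl

protected lemma one_mul (f : SGA σ) : 1 * f = f := by
  ext x
  rw [toFun_mul]
  rw [Finset.sum_eq_single (1 : G)]
  · simp [toFun_one]
  · intro b _ hb
    simp [toFun_one, hb]
  · simp

protected lemma mul_one (f : SGA σ) : f * 1 = f := by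
  ext x
  rw [toFun_mul]
  rw [Finset.sum_eq_single (x : G)]
  · simp [toFun_one]
  · intro b _ hb
    have : b⁻¹ * x ≠ 1 := by
      intro hc
      rw [inv_mul_eq_one] at hc
      exact hb hc
    simp [toFun_one, this]
  · simp

protected lemma mul_assoc (f h e : SGA σ) : f * h * e = f * (h * e) := by
  ext x
  rw [toFun_mul, toFun_mul]
  simp only [toFun_mul, Finset.sum_mul, map_sum, Finset.mul_sum, map_mul]
  rw [Finset.sum_comm]
  refine Finset.sum_congr rfl fun u _ => ?_
  rw [← Fintype.sum_equiv (Equiv.mulLeft u)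
    (fun v => f.toFun u * σ u (h.toFun v) * σ (u * v) (e.toFun ((u * v)⁻¹ * x)))
    (fun g => f.toFun u * σ u (h.toFun (u⁻¹ * g)) * σ g (e.toFun (g⁻¹ * x)))
    (fun v => by simp [Equiv.mulLeft])]
  refine Finset.sum_congr rfl fun v _ => ?_
  have h3 : (u * v)⁻¹ * x = v⁻¹ * (u⁻¹ * x) := by group
  have h4 : σ u (σ v (e.toFun (v⁻¹ * (u⁻¹ * x)))) = σ (u * v) (e.toFun (v⁻¹ * (u⁻¹ * x))) := by
    rw [map_mul σ]; rfl
  rw [h3, ← h4, mul_assoc]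

protected lemma left_distrib (f h e : SGA σ) : f * (h + e) = f * h + f * e := by
  ext x
  simp [mul_add, Finset.sum_add_distrib]

protected lemma right_distrib (f h e : SGA σ) : (f + h) * e = f * e + h * e := by
  ext x
  simp [add_mul, Finset.sum_add_distrib]

protected lemma zero_mul (f : SGA σ) : 0 * f = 0 := by
  ext x; simp

protected lemma mul_zero (f : SGA σ) : f * 0 = 0 := by
  ext x; simp

instance instRing : Ring (SGA σ) :=
  { (inferInstance : AddCommGroup (SGA σ)),
    (inferInstance : Mul (SGA σ)), (inferInstance : One (SGA σ)) with
    mul_assoc := SGA.mul_assoc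
    one_mul := SGA.one_mul
    mul_one := SGA.mul_one
    left_distrib := SGA.left_distrib
    right_distrib := SGA.right_distrib
    zero_mul := SGA.zero_mul
    mul_zero := SGA.mul_zero }

/-- The canonical inclusion `Λ → ΛG`, `λ ↦ λ ⊗ 1`. -/
def emb (σ : G →* (Λ ≃ₐ[k] Λ)) : Λ →+* SGA σ where
  toFun a := ⟨fun x => if x = 1 then a else 0⟩
  map_one' := rfl
  map_zero' := by ext x; simp
  map_add' a b := by ext x; by_cases hx : x = 1 <;> simp [hx]
  map_mul' a b := by
    ext x
    rw [toFun_mul]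
    rw [Finset.sum_eq_single (1 : G)]
    · by_cases hx : x = 1 <;> simp [hx]
    · intro b' _ hb'; simp [hb']
    · simp

end SGA

end CoreSGA

section GeneralDefs

/-- An idempotent `e` is primitive if it is nonzero and cannot be written as a sum of two
nonzero orthogonal idempotents. -/
def IsPrimitiveIdempotent (A : Type) [Ring A] (e : A) : Prop :=
  IsIdempotentElem e ∧ e ≠ 0 ∧
    ∀ f g : A, IsIdempotentElem f → IsIdempotentElem g → f * g = 0 → g * f = 0 →
      e = f + g → f = 0 ∨ g = 0

/-- A finite family `e : Fin n → A` is a complete set of primitive orthogonal idempotents. -/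
def IsCompletePrimitiveOrthogonalSystem (A : Type) [Ring A] {n : ℕ} (e : Fin n → A) : Prop :=
  (∀ i, IsPrimitiveIdempotent A (e i)) ∧
    (∀ i j, i ≠ j → e i * e j = 0) ∧ (∑ i, e i = 1)

/-- A ring is connected (indecomposable as an algebra) if its only central idempotents
are `0` and `1`. -/
def IsConnectedRing (A : Type) [Ring A] : Prop :=
  Nontrivial A ∧ ∀ e : A, IsIdempotentElem e → (∀ x : A, e * x = x * e) → e = 0 ∨ e = 1

/-- A ring is basic if it admits a complete set of primitive orthogonal idempotents `e i`
such that the indecomposable projective left modules `A e i` are pairwise nonisomorphic. -/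
def IsBasicRing (A : Type) [Ring A] : Prop :=
  ∃ (n : ℕ) (e : Fin n → A), IsCompletePrimitiveOrthogonalSystem A e ∧
    ∀ i j, i ≠ j →
      IsEmpty ((Submodule.span A {e i} : Submodule A A) ≃ₗ[A] (Submodule.span A {e j} : Submodule A A))

/-- `projDimLE A n M` : the `A`-module `M` admits a projective resolution of length at
most `n`, i.e. has projective dimension `≤ n`. -/
def projDimLE (A : Type) [Ring A] (n : ℕ) (M : Type) [AddCommGroup M] [Module A M] : Prop :=
  ∃ (P : ℕ → ModuleCat.{0} A) (d : (i : ℕ) → (P (i + 1) →ₗ[A] P i)) (ε : P 0 →ₗ[A] M),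
    (∀ i, Module.Projective A (P i)) ∧
    Function.Surjective ε ∧
    LinearMap.range (d 0) = LinearMap.ker ε ∧
    (∀ i, LinearMap.range (d (i + 1)) = LinearMap.ker (d i)) ∧
    (∀ i, n < i → ∀ x : P i, x = 0)

/-- The (little) global dimension of a ring, as an element of `ℕ∞`: the least `n` such that
every finitely generated `A`-module has projective dimension at most `n` (and `⊤` if there
is no such `n`). -/
noncomputable def globalDim (A : Type) [Ring A] : ℕ∞ :=
  sInf {c : ℕ∞ | ∃ n : ℕ, c = (n : ℕ∞) ∧
    ∀ (M : Type) [AddCommGroup M] [Module A M], Module.Finite A M → projDimLE A n M}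

/-- A module is indecomposable if it is nonzero and is not the internal direct sum of two
nonzero submodules. -/
def IsIndecomposableModule (A : Type) [Ring A] (M : Type) [AddCommGroup M] [Module A M] : Prop :=
  Nontrivial M ∧ ∀ N₁ N₂ : Submodule A M, IsCompl N₁ N₂ → N₁ = ⊥ ∨ N₂ = ⊥

/-- A ring has finite representation type if there are only finitely many isomorphism classes
of finitely generated indecomposable left modules. -/
def FiniteRepType (A : Type) [Ring A] : Prop :=
  ∃ S : Set (Σ m : ℕ, Submodule A (Fin m → A)), S.Finite ∧
    ∀ (M : Type) [AddCommGroup M] [Module A M], Module.Finite A M →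
      IsIndecomposableModule A M →
        ∃ p ∈ S, Nonempty (M ≃ₗ[A] ((Fin p.1 → A) ⧸ p.2))

/-- Two rings are Morita equivalent if their categories of modules are equivalent. -/
def MoritaEquivalent (A B : Type) [Ring A] [Ring B] : Prop :=
  Nonempty (ModuleCat.{0} A ≌ ModuleCat.{0} B)

/-- An Auslander algebra: global dimension at most `2`, and there is an exact sequence
`0 → A → I₀ → I₁` with `I₀`, `I₁` both projective and injective (equivalently, in a minimal
injective resolution `0 → A → I₀ → I₁ → I₂ → 0` the terms `I₀` and `I₁` are projective). -/
def IsAuslanderAlgebra (A : Type) [Ring A] : Prop :=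
  globalDim A ≤ 2 ∧
    ∃ (I₀ I₁ : ModuleCat.{0} A) (f : A →ₗ[A] I₀) (g : I₀ →ₗ[A] I₁),
      Module.Injective A I₀ ∧ Module.Projective A I₀ ∧
      Module.Injective A I₁ ∧ Module.Projective A I₁ ∧
      Function.Injective f ∧ LinearMap.ker g = LinearMap.range f

/-- The `i`-th power of a left ideal (with `I ^ 0 = ⊤`). -/
def leftIdealPow (A : Type) [Ring A] (I : Submodule A A) : ℕ → Submodule A A
  | 0 => ⊤
  | n + 1 => Submodule.span A {x : A | ∃ a ∈ I, ∃ b ∈ leftIdealPow A I n, x = a * b}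

end GeneralDefs
section Restriction

/-- Restriction of scalars along a ring homomorphism, as a type synonym. -/
def Res {A B : Type} [Ring A] [Ring B] (φ : A →+* B) (M : Type) : Type := M

instance {A B : Type} [Ring A] [Ring B] (φ : A →+* B) (M : Type) [AddCommGroup M] :
    AddCommGroup (Res φ M) := inferInstanceAs (AddCommGroup M)

instance {A B : Type} [Ring A] [Ring B] (φ : A →+* B) (M : Type) [AddCommGroup M] [Module B M] :
    Module A (Res φ M) := Module.compHom M φ

end Restriction

section Induction

variable {A B : Type} [Ring A] [Ring B] (φ : A →+* B)
variable (V : Type) [AddCommGroup V] [Module A V]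

/-- The submodule of relations defining the induced module `B ⊗_A V`. -/
def inducedRelations : Submodule B (V →₀ B) :=
  Submodule.span B
    {z | ∃ (a : A) (v : V), z = Finsupp.single (a • v) (1 : B) - Finsupp.single v (φ a)}

/-- The induced module `B ⊗_A V` along `φ : A →+* B`, realized as a quotient of the free
module on `V`. -/
def Induced : Type := (V →₀ B) ⧸ inducedRelations φ V

instance : AddCommGroup (Induced φ V) :=
  inferInstanceAs (AddCommGroup ((V →₀ B) ⧸ inducedRelations φ V))

instance : Module B (Induced φ V) :=
  inferInstanceAs (Module B ((V →₀ B) ⧸ inducedRelations φ V))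

end Induction

section RingPart

lemma aux_fitting {k : Type} [Field k] {A : Type} [Ring A] [Algebra k A] [FiniteDimensional k A]
    {e : A} (he : IsPrimitiveIdempotent A e) (x : A) (h1 : e * x = x) (h2 : x * e = x) :
    (∃ n : ℕ, x ^ n = 0) ∨ ∃ y, y * x = e ∧ x * y = e := by
  obtain ⟨n, y, hy⟩ : ∃ (n : ℕ) (y : A), x ^ (n + 1) * y = x ^ n ∧ Commute x y := by
    let B := Algebra.adjoin k {x}
    let X : B := ⟨x, Algebra.subset_adjoin rfl⟩
    let : CommRing B := { (inferInstance : Ring B) with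
      mul_comm := (Algebra.adjoinCommRingOfComm k (s := {x}) (by simp)).mul_comm }
    have : IsArtinian k B := inferInstance
    have : IsArtinianRing B := isArtinian_of_tower k inferInstance
    obtain ⟨n, y, hy⟩ := IsArtinian.exists_pow_succ_smul_dvd X (1 : B)
    refine ⟨n, y, ?_, ?_⟩
    · have := congrArg (Subtype.val) hy
      simpa [X] using this
    · have := congrArg (Subtype.val) (mul_comm X y)
      exact this
  obtain ⟨hy, hc⟩ := hy
  have key : ∀ m : ℕ, x ^ (n + m) * y ^ m = x ^ n := by
    intro m
    induction m with
    | zero => simp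
    | succ m ih =>
      calc x ^ (n + (m+1)) * y ^ (m+1) = x ^ m * (x ^ (n+1) * y) * y ^ m := by
            rw [pow_succ' y, ← mul_assoc, ← mul_assoc, ← pow_add]; congr 3; ring
        _ = x ^ (n + m) * y ^ m := by rw [hy, ← pow_add, add_comm]
        _ = x ^ n := ih
  -- use exponent N = n+1
  have key2 : x ^ (n+1) * (x ^ (n+1) * y ^ (n+1)) = x ^ (n+1) := by
    rw [← mul_assoc, ← pow_add]
    have := key (n+1)
    calc x ^ (n+1+(n+1)) * y ^ (n+1) = x * (x ^ (n + (n+1)) * y ^ (n+1)) := by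
          rw [← mul_assoc, ← pow_succ']; congr 2; ring
      _ = _ := by rw [this, ← pow_succ']
  set z := x ^ (n+1) * y ^ (n+1) with hz
  have hcz : Commute (x ^ (n+1)) (y ^ (n+1)) := (hc.pow_pow _ _)
  have hzz : z * z = z := by
    calc z * z = y ^ (n+1) * (x ^ (n+1) * z) := by
            rw [← mul_assoc (y ^ (n+1)), ← hcz.eq, ← hz]
      _ = z := by rw [key2, ← hcz.eq]
  have hez : e * z = z := by
    rw [hz, ← mul_assoc, pow_succ', ← mul_assoc e, h1]
  have hze : z * e = z := by
    rw [hz, hcz.eq, mul_assoc, pow_succ x, mul_assoc, h2]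
  have hee : e * e = e := he.1
  rcases he.2.2 z (e - z) hzz (by
      show (e - z) * (e - z) = e - z
      rw [sub_mul, mul_sub, mul_sub, hee, hez, hze, hzz]; abel) (by rw [mul_sub, hze, hzz, sub_self])
      (by rw [sub_mul, hez, hzz, sub_self]) (by abel) with h | h
  · left
    refine ⟨n+1, ?_⟩
    rw [← key2, h, mul_zero]
  · right
    have hze' : z = e := (sub_eq_zero.mp h).symm
    refine ⟨x ^ n * y ^ (n+1), ?_, ?_⟩
    · rw [← hze', hz, pow_succ x, mul_assoc, mul_assoc, (hc.pow_right _).eq]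
    · rw [← hze', hz, ← mul_assoc, ← pow_succ']

lemma aux_iso {A : Type} [Ring A] {e f a b : A} (he : e * e = e) (hf : f * f = f)
    (h1 : a * f = a) (h2 : b * e = b) (h3 : a * b = e) (h4 : b * a = f) :
    Nonempty ((Submodule.span A {e} : Submodule A A) ≃ₗ[A] (Submodule.span A {f} : Submodule A A)) := by
  refine ⟨LinearEquiv.ofLinearMap
    (((LinearMap.toSpanSingleton A A a).comp (Submodule.subtype _)).codRestrict _ ?_)
    (((LinearMap.toSpanSingleton A A b).comp (Submodule.subtype _)).codRestrict _ ?_) ?_ ?_⟩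
  · intro c
    refine Submodule.mem_span_singleton.mpr ⟨c.1 * a, ?_⟩
    simp [mul_assoc, h1]
  · intro c
    refine Submodule.mem_span_singleton.mpr ⟨c.1 * b, ?_⟩
    simp [mul_assoc, h2]
  · ext ⟨c, hc⟩
    obtain ⟨d, rfl⟩ := Submodule.mem_span_singleton.mp hc
    simp [mul_assoc, h4, hf]
  · ext ⟨c, hc⟩
    obtain ⟨d, rfl⟩ := Submodule.mem_span_singleton.mp hc
    simp [mul_assoc, h3, he]

lemma aux_nilp {k : Type} [Field k] {A : Type} [Ring A] [Algebra k A] [FiniteDimensional k A]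
    {e f : A} (he : IsPrimitiveIdempotent A e) (hf : IsPrimitiveIdempotent A f)
    (hn : IsEmpty ((Submodule.span A {e} : Submodule A A) ≃ₗ[A] (Submodule.span A {f} : Submodule A A)))
    (a b : A) (h1 : e * a = a) (h2 : a * f = a) (h3 : f * b = b) (h4 : b * e = b) :
    ∃ n : ℕ, (a * b) ^ n = 0 := by
  rcases aux_fitting (k := k) he (a * b) (by rw [← mul_assoc, h1]) (by rw [mul_assoc, h4]) with h | ⟨y, hy1, hy2⟩
  · exact h
  · exfalso
    have hee : e * e = e := he.1
    have hff : f * f = f := hf.1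
    -- b' = b * y * e
    have hab : a * (b * y * e) = e := by
      rw [← mul_assoc, ← mul_assoc, hy2, hee]
    set c := b * y * e with hc
    have hfc : f * c = c := by rw [hc, ← mul_assoc, ← mul_assoc, h3]
    have hce : c * e = c := by rw [hc, mul_assoc, hee]
    set z := c * a with hz
    have hzz : z * z = z := by
      rw [hz, mul_assoc, ← mul_assoc a, hab, h1]
    have hfz : f * z = z := by rw [hz, ← mul_assoc, hfc]
    have hzf : z * f = z := by rw [hz, mul_assoc, h2]
    rcases hf.2.2 z (f - z) hzz (by
      show (f - z) * (f - z) = f - z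
      rw [sub_mul, mul_sub, mul_sub, hff, hfz, hzf, hzz]; abel) (by rw [mul_sub, hzf, hzz, sub_self])
      (by rw [sub_mul, hfz, hzz, sub_self]) (by abel) with h | h
    · apply he.2.1
      calc e = (a * c) * (a * c) := by rw [hab, hee]
        _ = a * z * c := by rw [hz]; simp only [mul_assoc]
        _ = 0 := by rw [h]; simp
    · exact (not_nonempty_iff.mpr hn) (aux_iso hee hff h2 hce hab (sub_eq_zero.mp h).symm)

lemma aux_pow_smul {A T : Type} [Ring A] [AddCommGroup T] [Module A T] {x : A} {t : T}
    (h : x • t = t) (n : ℕ) : x ^ n • t = t := by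
  induction n with
  | zero => simp
  | succ n ih => rw [pow_succ, mul_smul, h, ih]

lemma aux_simple {k : Type} [Field k] {A : Type} [Ring A] [Algebra k A] [FiniteDimensional k A]
    (hb : IsBasicRing A) (T : Type) [AddCommGroup T] [Module A T] [IsSimpleModule A T]
    (f : A) (hf : f * f = f) : (∀ t : T, f • t = 0) ∨ (∀ t : T, f • t = t) := by
  obtain ⟨n, e, ⟨hp, ho, hs⟩, hiso⟩ := hb
  have hgen : ∀ s t : T, s ≠ 0 → ∃ a : A, a • s = t := fun s t hs =>
    IsSimpleModule.toSpanSingleton_surjective A hs t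
  have hsum : ∀ t : T, ∑ i, e i • t = t := fun t => by rw [← Finset.sum_smul, hs, one_smul]
  have hidem : ∀ i, e i * e i = e i := fun i => (hp i).1
  have hnt := IsSimpleModule.nontrivial A T
  obtain ⟨t₀, ht₀⟩ := exists_ne (0 : T)
  obtain ⟨i, hi⟩ : ∃ i, e i • t₀ ≠ 0 := by
    by_contra hcon
    push Not at hcon
    exact ht₀ (by rw [← hsum t₀]; exact Finset.sum_eq_zero fun i _ => hcon i)
  have hj : ∀ j, j ≠ i → ∀ t : T, e j • t = 0 := by
    intro j hji t
    by_contra hne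
    obtain ⟨a, ha⟩ := hgen _ (e i • t₀) hne
    obtain ⟨b, hb⟩ := hgen _ (e j • t) hi
    obtain ⟨m, hm⟩ := aux_nilp (k := k) (hp i) (hp j) (hiso i j hji.symm) (e i * a * e j)
      (e j * b * e i) (by simp only [← mul_assoc, hidem]) (by simp only [mul_assoc, hidem])
      (by simp only [← mul_assoc, hidem]) (by simp only [mul_assoc, hidem])
    have h1 : (e j * b * e i) • e i • t₀ = e j • t := by
      rw [mul_smul, ← mul_smul (e i), hidem, mul_smul, hb, ← mul_smul, hidem]
    have h2 : (e i * a * e j) • e j • t = e i • t₀ := by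
      rw [mul_smul, ← mul_smul (e j), hidem, mul_smul, ha, ← mul_smul, hidem]
    have h3 : ((e i * a * e j) * (e j * b * e i)) • e i • t₀ = e i • t₀ := by
      rw [mul_smul, h1, h2]
    have := aux_pow_smul h3 m
    rw [hm, zero_smul] at this
    exact hi this.symm
  have hone : ∀ t : T, e i • t = t := by
    intro t
    conv_rhs => rw [← hsum t]
    rw [Finset.sum_eq_single i (fun j _ h => hj j h t) (by simp)]
  have hefe : ∀ t : T, (e i * f * e i) • t = f • t := by
    intro t; rw [mul_smul, mul_smul, hone, hone]
  rcases aux_fitting (k := k) (hp i) (e i * f * e i) (by simp only [← mul_assoc, hidem])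
    (by simp only [mul_assoc, hidem]) with ⟨m, hm⟩ | ⟨y, hy, -⟩
  · left
    intro t
    have h1 : (e i * f * e i) • f • t = f • t := by rw [hefe, ← mul_smul, hf]
    have := aux_pow_smul h1 m
    rw [hm, zero_smul] at this
    exact this.symm
  · right
    intro t
    have h1 : ∀ t : T, y • f • t = t := fun t => by rw [← hefe, ← mul_smul, hy, hone]
    rw [← h1 (f • t), ← mul_smul f, hf, h1]

lemma aux_comm {k : Type} [Field k] {A : Type} [Ring A] [Algebra k A] [FiniteDimensional k A]
    (hb : IsBasicRing A) (f : A) (hf : f * f = f) (x : A) : f * x - x * f ∈ Ring.jacobson A := by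
  rw [Ring.jacobson, Module.jacobson, Submodule.mem_sInf]
  intro m hm
  have : IsSimpleModule A (A ⧸ m) := isSimpleModule_iff_isCoatom.mpr hm
  rw [← Submodule.Quotient.mk_eq_zero]
  have : (Submodule.Quotient.mk (f * x - x * f) : A ⧸ m) =
      (f * x - x * f) • (Submodule.Quotient.mk 1 : A ⧸ m) := by
    rw [← Submodule.Quotient.mk_smul]; simp
  rw [this, sub_smul, mul_smul, mul_smul]
  rcases aux_simple (k := k) hb (A ⧸ m) f hf with h | h
  · rw [h, h, smul_zero, sub_zero]
  · rw [h, h, sub_self]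

end RingPart

section SkewPart

variable {k : Type} [CommRing k] {A : Type} [Ring A] [Algebra k A]
variable {G : Type} [Group G] [Fintype G] {σ : G →* (A ≃ₐ[k] A)}

/-- The group element `g` in the skew group algebra. -/
def uu (σ : G →* (A ≃ₐ[k] A)) (g : G) : SGA σ := ⟨fun x => if x = g then 1 else 0⟩

lemma emb_toFun (a : A) (x : G) : (SGA.emb σ a).toFun x = if x = 1 then a else 0 := rfl
lemma uu_toFun (g x : G) : (uu σ g).toFun x = if x = g then 1 else 0 := rfl

lemma emb_mul_toFun (a : A) (b : SGA σ) (x : G) : (SGA.emb σ a * b).toFun x = a * b.toFun x := by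
  rw [SGA.toFun_mul, Finset.sum_eq_single (1 : G)]
  · simp [emb_toFun]
  · intro g _ hg; simp [emb_toFun, hg]
  · simp

lemma uu_mul_toFun (g : G) (b : SGA σ) (x : G) :
    (uu σ g * b).toFun x = σ g (b.toFun (g⁻¹ * x)) := by
  rw [SGA.toFun_mul, Finset.sum_eq_single g]
  · simp [uu_toFun]
  · intro h _ hg; simp [uu_toFun, hg]
  · simp

lemma uu_one : uu σ 1 = 1 := rfl

lemma uu_mul (g h : G) : uu σ g * uu σ h = uu σ (g * h) := by
  ext x
  rw [uu_mul_toFun, uu_toFun, uu_toFun]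
  by_cases hx : x = g * h
  · subst hx; simp
  · have : g⁻¹ * x ≠ h := fun h' => hx (by rw [← h']; group)
    simp [hx, this]

lemma uu_emb (g : G) (a : A) : uu σ g * SGA.emb σ a = SGA.emb σ (σ g a) * uu σ g := by
  ext x
  rw [uu_mul_toFun, emb_mul_toFun, uu_toFun, emb_toFun]
  by_cases hx : x = g
  · subst hx; simp
  · have : g⁻¹ * x ≠ 1 := fun h' => hx (by rw [inv_mul_eq_one] at h'; exact h'.symm)
    simp [hx, this]

lemma sum_toFun {ι : Type} (s : Finset ι) (f : ι → SGA σ) (x : G) :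
    (∑ i ∈ s, f i).toFun x = ∑ i ∈ s, (f i).toFun x := by
  induction s using Finset.induction_on with
  | empty => simp
  | insert a s ha ih => rw [Finset.sum_insert ha, Finset.sum_insert ha, SGA.toFun_add, ih]

lemma sga_decomp (b : SGA σ) : b = ∑ g, SGA.emb σ (b.toFun g) * uu σ g := by
  ext x
  rw [sum_toFun, Finset.sum_eq_single x]
  · rw [emb_mul_toFun, uu_toFun]; simp
  · intro h _ hh; rw [emb_mul_toFun, uu_toFun]; simp [hh.symm]
  · simp

lemma sga_decomp' (b : SGA σ) : b = ∑ g, uu σ g * SGA.emb σ (σ g⁻¹ (b.toFun g)) := by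
  conv_lhs => rw [sga_decomp b]
  refine Finset.sum_congr rfl fun g _ => ?_
  rw [uu_emb]
  congr 2
  rw [← AlgEquiv.mul_apply, ← map_mul]; simp

section Mods

variable {M X Y : Type} [AddCommGroup M] [AddCommGroup X] [AddCommGroup Y]
  [Module (SGA σ) M] [Module (SGA σ) X] [Module (SGA σ) Y]

lemma uu_smul_smul (g h : G) (x : X) : uu σ g • uu σ h • x = uu σ (g * h) • x := by
  rw [← mul_smul, uu_mul]

lemma uu_smul_emb (g : G) (a : A) (x : X) :
    uu σ g • SGA.emb σ a • x = SGA.emb σ (σ g a) • uu σ g • x := by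
  rw [← mul_smul, uu_emb, mul_smul]

/-- Additive maps commuting with `A` and `G` are linear over the skew group algebra. -/
def mkLin (l : X →+ Y) (h1 : ∀ (a : A) x, l (SGA.emb σ a • x) = SGA.emb σ a • l x)
    (h2 : ∀ (g : G) x, l (uu σ g • x) = uu σ g • l x) : X →ₗ[SGA σ] Y where
  toFun := l
  map_add' := l.map_add
  map_smul' b x := by
    simp only [RingHom.id_apply]
    rw [sga_decomp b, Finset.sum_smul, Finset.sum_smul, map_sum]
    refine Finset.sum_congr rfl fun g _ => ?_
    rw [mul_smul, mul_smul, h1, h2]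

variable (J : Ideal A) (ε : A)

lemma d_alin (l : X →+ Y) (h1 : ∀ (a : A) x, l (SGA.emb σ a • x) = SGA.emb σ a • l x)
    (g : G) (a : A) (x : X) : uu σ g • l (uu σ g⁻¹ • SGA.emb σ a • x) =
      SGA.emb σ a • uu σ g • l (uu σ g⁻¹ • x) := by
  rw [uu_smul_emb, h1, uu_smul_emb, ← AlgEquiv.mul_apply, ← map_mul]
  simp

lemma core_proj (hε : ∑ g, σ g ε = 1) (hc : ∀ g a, σ g ε * a - a * σ g ε ∈ J)
    (π : X →ₗ[SGA σ] Y) (h : M →ₗ[SGA σ] Y) (l : M →+ X)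
    (hl : ∀ (a : A) x, l (SGA.emb σ a • x) = SGA.emb σ a • l x) (hπl : ∀ m, π (l m) = h m)
    (hJ : ∀ x, π x = 0 → ∀ c ∈ J, SGA.emb σ c • x = 0) :
    ∃ l' : M →ₗ[SGA σ] X, ∀ m, π (l' m) = h m := by
  let d : G → M → X := fun g m => uu σ g • l (uu σ g⁻¹ • m)
  have hd : ∀ g a m, d g (SGA.emb σ a • m) = SGA.emb σ a • d g m := fun g a m =>
    d_alin l hl g a m
  have hdadd : ∀ g m m', d g (m + m') = d g m + d g m' := by
    intro g m m'; simp [d, smul_add]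
  have hdπ : ∀ g m, π (d g m) = h m := by
    intro g m
    simp only [d]
    rw [map_smul, hπl, ← map_smul, uu_smul_smul]
    simp [uu_one]
  let L : M →+ X := AddMonoidHom.mk' (fun m => ∑ g, SGA.emb σ (σ g ε) • d g m) (by
    intro m m'
    simp only [hdadd, smul_add, Finset.sum_add_distrib])
  have hL : ∀ m, L m = ∑ g, SGA.emb σ (σ g ε) • d g m := fun m => rfl
  have hsum1 : ∀ {Z : Type} [AddCommGroup Z] [Module (SGA σ) Z] (z : Z),
      ∑ g, SGA.emb σ (σ g ε) • z = z := by
    intro Z _ _ z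
    rw [← Finset.sum_smul, ← map_sum, hε, map_one, one_smul]
  have hLl : ∀ m, L m = l m + ∑ g, SGA.emb σ (σ g ε) • (d g m - l m) := by
    intro m
    simp only [smul_sub, Finset.sum_sub_distrib]
    rw [hsum1, hL]; abel
  refine ⟨mkLin L ?_ ?_, ?_⟩
  · intro a m
    rw [hLl, hLl, hl, smul_add, Finset.smul_sum]
    congr 1
    refine Finset.sum_congr rfl fun g _ => ?_
    rw [hd, ← smul_sub, ← mul_smul, ← mul_smul, ← map_mul, ← map_mul, ← sub_eq_zero, ← sub_smul,
      ← map_sub]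
    exact hJ _ (by rw [map_sub, hdπ, hπl, sub_self]) _ (hc g a)
  · intro t m
    rw [hL, hL, Finset.smul_sum]
    symm
    refine Fintype.sum_equiv (Equiv.mulLeft t) _ _ fun g => ?_
    simp only [d, Equiv.coe_mulLeft]
    rw [uu_smul_emb, uu_smul_smul, uu_smul_smul, ← AlgEquiv.mul_apply, ← map_mul]
    simp [mul_assoc]
  · intro m
    show π (L m) = h m
    rw [hL, map_sum]
    simp only [map_smul, hdπ]
    exact hsum1 _

lemma core_inj (hε : ∑ g, σ g ε = 1) (hc : ∀ g a, σ g ε * a - a * σ g ε ∈ J)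
    (i : X →ₗ[SGA σ] Y) (h : X →ₗ[SGA σ] M) (l : Y →+ M)
    (hl : ∀ (a : A) x, l (SGA.emb σ a • x) = SGA.emb σ a • l x) (hli : ∀ x, l (i x) = h x)
    (hJ : ∀ y, ∀ c ∈ J, ∃ x, SGA.emb σ c • y = i x) :
    ∃ l' : Y →ₗ[SGA σ] M, ∀ x, l' (i x) = h x := by
  let d : G → Y → M := fun g m => uu σ g • l (uu σ g⁻¹ • m)
  have hd : ∀ g a m, d g (SGA.emb σ a • m) = SGA.emb σ a • d g m := fun g a m =>
    d_alin l hl g a m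
  have hdadd : ∀ g m m', d g (m + m') = d g m + d g m' := by
    intro g m m'; simp [d, smul_add]
  have hdi : ∀ g x, d g (i x) = h x := by
    intro g x
    simp only [d]
    rw [← map_smul i, hli, map_smul, uu_smul_smul]
    simp [uu_one]
  let L : Y →+ M := AddMonoidHom.mk' (fun m => ∑ g, d g (SGA.emb σ (σ g ε) • m)) (by
    intro m m'
    simp only [hdadd, smul_add, Finset.sum_add_distrib])
  have hL : ∀ m, L m = ∑ g, d g (SGA.emb σ (σ g ε) • m) := fun m => rfl
  have hsum1 : ∀ {Z : Type} [AddCommGroup Z] [Module (SGA σ) Z] (z : Z),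
      ∑ g, SGA.emb σ (σ g ε) • z = z := by
    intro Z _ _ z
    rw [← Finset.sum_smul, ← map_sum, hε, map_one, one_smul]
  let q : G → Y →+ M := fun g => AddMonoidHom.mk' (fun m => d g m - l m) (by
    intro m m'; rw [hdadd, map_add]; abel)
  have hq : ∀ g m, q g m = d g m - l m := fun g m => rfl
  have hqi : ∀ g x, q g (i x) = 0 := fun g x => by rw [hq, hdi, hli, sub_self]
  have hqa : ∀ g a m, q g (SGA.emb σ a • m) = SGA.emb σ a • q g m := fun g a m => by
    rw [hq, hq, hd, hl, smul_sub]
  have hLl : ∀ m, L m = l m + ∑ g, q g (SGA.emb σ (σ g ε) • m) := by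
    intro m
    simp only [hq, Finset.sum_sub_distrib]
    rw [← map_sum, hsum1, hL]; abel
  refine ⟨mkLin L ?_ ?_, ?_⟩
  · intro a m
    rw [hLl, hLl, hl, smul_add, Finset.smul_sum]
    congr 1
    refine Finset.sum_congr rfl fun g _ => ?_
    rw [← hqa, ← mul_smul, ← mul_smul, ← map_mul, ← map_mul, ← sub_eq_zero, ← map_sub, ← sub_smul,
      ← map_sub]
    obtain ⟨x, hx⟩ := hJ m _ (hc g a)
    rw [hx, hqi]
  · intro t m
    rw [hL, hL, Finset.smul_sum]
    symm
    refine Fintype.sum_equiv (Equiv.mulLeft t) _ _ fun g => ?_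
    simp only [d, Equiv.coe_mulLeft]
    rw [uu_smul_smul, uu_smul_emb, uu_smul_emb, uu_smul_smul, ← AlgEquiv.mul_apply, ← AlgEquiv.mul_apply,
      ← map_mul, ← map_mul]
    simp [mul_assoc]
  · intro x
    show L (i x) = h x
    rw [hL]
    simp only [← map_smul, hdi]
    rw [← map_sum, hsum1]

/-- Elements that `J` carries into `N`. -/
def colonJ (hJσ : ∀ g, ∀ c ∈ J, σ g c ∈ J) (hJr : ∀ c ∈ J, ∀ a, c * a ∈ J)
    (N : Submodule (SGA σ) X) : Submodule (SGA σ) X where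
  carrier := {x | ∀ c ∈ J, SGA.emb σ c • x ∈ N}
  add_mem' := by
    intro a b ha hb c hc
    rw [smul_add]; exact N.add_mem (ha c hc) (hb c hc)
  zero_mem' := by intro c _; rw [smul_zero]; exact N.zero_mem
  smul_mem' := by
    intro b x hx c hc
    rw [sga_decomp b, Finset.sum_smul, Finset.smul_sum]
    refine N.sum_mem fun g _ => ?_
    have : SGA.emb σ c • (SGA.emb σ (b.toFun g) * uu σ g) • x =
        uu σ g • SGA.emb σ (σ g⁻¹ (c * b.toFun g)) • x := by
      rw [uu_smul_emb, ← mul_smul, ← mul_assoc, mul_smul, ← map_mul, ← AlgEquiv.mul_apply, ← map_mul]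
      simp
    rw [this]
    exact N.smul_mem _ (hx _ (hJσ _ _ (hJr _ hc _)))

lemma mem_colonJ (hJσ : ∀ g, ∀ c ∈ J, σ g c ∈ J) (hJr : ∀ c ∈ J, ∀ a, c * a ∈ J)
    (N : Submodule (SGA σ) X) (x : X) :
    x ∈ colonJ J hJσ hJr N ↔ ∀ c ∈ J, SGA.emb σ c • x ∈ N := Iff.rfl

end Mods

variable {J : Ideal A} [J.IsTwoSided] {ε : A}

lemma lift_proj (hε : ∑ g, σ g ε = 1) (hc : ∀ g a, σ g ε * a - a * σ g ε ∈ J)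
    (hJσ : ∀ g, ∀ c ∈ J, σ g c ∈ J) (hJr : ∀ c ∈ J, ∀ a, c * a ∈ J)
    (M : Type) [AddCommGroup M] [Module (SGA σ) M]
    (hM : Module.Projective A (Res (SGA.emb σ) M)) (n : ℕ) :
    ∀ (X Y : Type) [AddCommGroup X] [AddCommGroup Y] [Module (SGA σ) X] [Module (SGA σ) Y]
      (π : X →ₗ[SGA σ] Y) (h : M →ₗ[SGA σ] Y), Function.Surjective π →
      (∀ x, π x = 0 → ∀ c ∈ J ^ n, SGA.emb σ c • x = 0) →
      ∃ l' : M →ₗ[SGA σ] X, ∀ m, π (l' m) = h m := by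
  have step : ∀ (X Y : Type) [AddCommGroup X] [AddCommGroup Y] [Module (SGA σ) X] [Module (SGA σ) Y]
      (π : X →ₗ[SGA σ] Y) (h : M →ₗ[SGA σ] Y), Function.Surjective π →
      (∀ x, π x = 0 → ∀ c ∈ J, SGA.emb σ c • x = 0) →
      ∃ l' : M →ₗ[SGA σ] X, ∀ m, π (l' m) = h m := by
    intro X Y _ _ _ _ π h hs hk
    let π' : Res (SGA.emb σ) X →ₗ[A] Res (SGA.emb σ) Y :=
      { toFun := fun x => π x
        map_add' := fun x y => π.map_add x y
        map_smul' := fun a x => π.map_smul (SGA.emb σ a) x }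
    let h' : Res (SGA.emb σ) M →ₗ[A] Res (SGA.emb σ) Y :=
      { toFun := fun x => h x
        map_add' := fun x y => h.map_add x y
        map_smul' := fun a x => h.map_smul (SGA.emb σ a) x }
    obtain ⟨l, hl⟩ := Module.projective_lifting_property π' h' hs
    exact core_proj J ε hε hc π h
      { toFun := fun m => (l m : X)
        map_zero' := l.map_zero
        map_add' := fun x y => l.map_add x y }
      (fun a x => l.map_smul a x) (fun m => LinearMap.congr_fun hl m) hk
  induction n with
  | zero =>
    intro X Y _ _ _ _ π h hs hk
    refine step X Y π h hs fun x hx c _ => ?_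
    have := hk x hx 1 (by rw [Submodule.pow_zero, Ideal.one_eq_top]; trivial)
    rw [map_one, one_smul] at this
    rw [this, smul_zero]
  | succ n ih =>
    intro X Y _ _ _ _ π h hs hk
    let K : Submodule (SGA σ) X := colonJ J hJσ hJr ⊥ ⊓ LinearMap.ker π
    obtain ⟨l₁, hl₁⟩ := ih (X ⧸ K) Y (K.liftQ π inf_le_right) h (by
      intro y
      obtain ⟨x, rfl⟩ := hs y
      exact ⟨K.mkQ x, by simp⟩) (by
      intro x hx c hcn
      obtain ⟨x, rfl⟩ := K.mkQ_surjective x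
      rw [← map_smul, Submodule.mkQ_apply, Submodule.Quotient.mk_eq_zero]
      have hx' : π x = 0 := by simpa using hx
      refine ⟨fun a ha => ?_, ?_⟩
      · rw [Submodule.mem_bot, ← mul_smul, ← map_mul]
        exact hk x hx' _ (by rw [Ideal.IsTwoSided.pow_succ]; exact Ideal.mul_mem_mul ha hcn)
      · show π _ = 0
        rw [map_smul, hx', smul_zero])
    obtain ⟨l₂, hl₂⟩ := step X (X ⧸ K) K.mkQ l₁ K.mkQ_surjective (by
      intro x hx c hcJ
      have : x ∈ K := by simpa using hx
      exact (Submodule.mem_bot _).mp (this.1 c hcJ))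
    refine ⟨l₂, fun m => ?_⟩
    rw [← hl₁, ← hl₂]; simp

lemma ext_inj (hε : ∑ g, σ g ε = 1) (hc : ∀ g a, σ g ε * a - a * σ g ε ∈ J)
    (hJσ : ∀ g, ∀ c ∈ J, σ g c ∈ J) (hJr : ∀ c ∈ J, ∀ a, c * a ∈ J)
    (M : Type) [AddCommGroup M] [Module (SGA σ) M]
    (hM : Module.Injective A (Res (SGA.emb σ) M)) (n : ℕ) :
    ∀ (X Y : Type) [AddCommGroup X] [AddCommGroup Y] [Module (SGA σ) X] [Module (SGA σ) Y]
      (i : X →ₗ[SGA σ] Y) (h : X →ₗ[SGA σ] M), Function.Injective i →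
      (∀ y, ∀ c ∈ J ^ n, ∃ x, SGA.emb σ c • y = i x) →
      ∃ l' : Y →ₗ[SGA σ] M, ∀ x, l' (i x) = h x := by
  have step : ∀ (X Y : Type) [AddCommGroup X] [AddCommGroup Y] [Module (SGA σ) X] [Module (SGA σ) Y]
      (i : X →ₗ[SGA σ] Y) (h : X →ₗ[SGA σ] M), Function.Injective i →
      (∀ y, ∀ c ∈ J, ∃ x, SGA.emb σ c • y = i x) →
      ∃ l' : Y →ₗ[SGA σ] M, ∀ x, l' (i x) = h x := by
    intro X Y _ _ _ _ i h hs hk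
    let i' : Res (SGA.emb σ) X →ₗ[A] Res (SGA.emb σ) Y :=
      { toFun := fun x => i x
        map_add' := fun x y => i.map_add x y
        map_smul' := fun a x => i.map_smul (SGA.emb σ a) x }
    let h' : Res (SGA.emb σ) X →ₗ[A] Res (SGA.emb σ) M :=
      { toFun := fun x => h x
        map_add' := fun x y => h.map_add x y
        map_smul' := fun a x => h.map_smul (SGA.emb σ a) x }
    obtain ⟨l, hl⟩ := hM.out i' hs h'
    exact core_inj J ε hε hc i h
      { toFun := fun m => (l m : M)
        map_zero' := l.map_zero
        map_add' := fun x y => l.map_add x y }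
      (fun a x => l.map_smul a x) (fun m => hl m) hk
  induction n with
  | zero =>
    intro X Y _ _ _ _ i h hs hk
    refine step X Y i h hs fun y c _ => ?_
    obtain ⟨x, hx⟩ := hk y 1 (by rw [Submodule.pow_zero, Ideal.one_eq_top]; trivial)
    rw [map_one, one_smul] at hx
    exact ⟨SGA.emb σ c • x, by rw [hx, map_smul]⟩
  | succ n ih =>
    intro X Y _ _ _ _ i h hs hk
    let K : Submodule (SGA σ) Y := colonJ J hJσ hJr (LinearMap.range i)
    have hiK : ∀ x, i x ∈ K := fun x c _ => ⟨SGA.emb σ c • x, by rw [map_smul]⟩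
    obtain ⟨l₁, hl₁⟩ := step X K (i.codRestrict K hiK) h
      (fun a b hab => hs (congrArg Subtype.val hab)) (by
      intro y c hcJ
      obtain ⟨x, hx⟩ := y.2 c hcJ
      exact ⟨x, Subtype.ext hx.symm⟩)
    obtain ⟨l₂, hl₂⟩ := ih K Y K.subtype l₁ K.injective_subtype (by
      intro y c hcn
      refine ⟨⟨SGA.emb σ c • y, fun a ha => ?_⟩, rfl⟩
      obtain ⟨x, hx⟩ := hk y (a * c) (by rw [Ideal.IsTwoSided.pow_succ]; exact Ideal.mul_mem_mul ha hcn)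
      exact ⟨x, by rw [← hx, map_mul, mul_smul]⟩)
    refine ⟨l₂, fun x => ?_⟩
    rw [← hl₁, ← hl₂]; rfl

/-- The skew group algebra is free over the base. -/
def resEquiv (σ : G →* (A ≃ₐ[k] A)) : Res (SGA.emb σ) (SGA σ) ≃ₗ[A] (G → A) where
  toFun b := SGA.toFun (σ := σ) b
  invFun f := (SGA.mk f : SGA σ)
  left_inv _ := rfl
  right_inv _ := rfl
  map_add' _ _ := rfl
  map_smul' a b := by
    funext x
    exact emb_mul_toFun (σ := σ) a b x

lemma proj_res (M : Type) [AddCommGroup M] [Module (SGA σ) M]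
    (hM : Module.Projective (SGA σ) M) : Module.Projective A (Res (SGA.emb σ) M) := by
  obtain ⟨s, hs⟩ := hM.out
  have hfree : Module.Free A (Res (SGA.emb σ) (SGA σ)) :=
    Module.Free.of_equiv (resEquiv σ).symm
  let i : Res (SGA.emb σ) M →ₗ[A] (M →₀ Res (SGA.emb σ) (SGA σ)) :=
    { toFun := fun m => (s m : M →₀ SGA σ)
      map_add' := fun x y => s.map_add x y
      map_smul' := fun a x => s.map_smul (SGA.emb σ a) x }
  let q : (M →₀ Res (SGA.emb σ) (SGA σ)) →ₗ[A] Res (SGA.emb σ) M :=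
    { toFun := fun f => Finsupp.linearCombination (SGA σ) (id : M → M) (f : M →₀ SGA σ)
      map_add' := fun x y => (Finsupp.linearCombination (SGA σ) (id : M → M)).map_add x y
      map_smul' := fun a x => (Finsupp.linearCombination (SGA σ) (id : M → M)).map_smul (SGA.emb σ a) x }
  exact Module.Projective.of_split i q (LinearMap.ext fun m => hs m)

lemma inj_res (M : Type) [AddCommGroup M] [Module (SGA σ) M]
    (hM : Module.Injective (SGA σ) M) : Module.Injective A (Res (SGA.emb σ) M) := by
  apply Module.Baer.injective
  intro I h
  let h' : I →+ M := { toFun := fun x => h x, map_zero' := h.map_zero, map_add' := fun x y => h.map_add x y }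
  have hh' : ∀ (a : A) (x : I), h' (a • x) = SGA.emb σ a • h' x := fun a x => h.map_smul a x
  let N : Submodule (SGA σ) (SGA σ) :=
    { carrier := {b | ∀ x, σ x⁻¹ (b.toFun x) ∈ I}
      add_mem' := by
        intro a b ha hb x
        rw [SGA.toFun_add, map_add]; exact I.add_mem (ha x) (hb x)
      zero_mem' := by intro x; simp
      smul_mem' := by
        intro c b hb x
        rw [smul_eq_mul, SGA.toFun_mul, map_sum]
        refine I.sum_mem fun g _ => ?_
        rw [map_mul]
        apply I.mul_mem_left
        have := hb (g⁻¹ * x)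
        rw [← AlgEquiv.mul_apply, ← map_mul]
        simpa using this }
  let H : N →+ M := AddMonoidHom.mk' (fun b => ∑ x, uu σ x • h' ⟨_, b.2 x⟩) (by
    intro a b
    rw [← Finset.sum_add_distrib]
    refine Finset.sum_congr rfl fun x _ => ?_
    rw [← smul_add, ← map_add]
    congr 2
    apply Subtype.ext
    show σ x⁻¹ ((a.1 + b.1).toFun x) = _
    rw [SGA.toFun_add, map_add]; rfl)
  have hH : ∀ b, H b = ∑ x, uu σ x • h' ⟨_, b.2 x⟩ := fun _ => rfl
  let HL : N →ₗ[SGA σ] M := mkLin H (by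
      intro a b
      rw [hH, hH, Finset.smul_sum]
      refine Finset.sum_congr rfl fun x _ => ?_
      have : SGA.emb σ a • uu σ x • h' ⟨_, b.2 x⟩ = uu σ x • SGA.emb σ (σ x⁻¹ a) • h' ⟨_, b.2 x⟩ := by
        rw [uu_smul_emb, ← AlgEquiv.mul_apply, ← map_mul]; simp
      rw [this, ← hh']
      congr 2
      apply Subtype.ext
      show σ x⁻¹ ((SGA.emb σ a * b.1).toFun x) = σ x⁻¹ a * σ x⁻¹ (b.1.toFun x)
      rw [emb_mul_toFun, map_mul]) (by
      intro t b
      rw [hH, hH, Finset.smul_sum]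
      symm
      refine Fintype.sum_equiv (Equiv.mulLeft t) _ _ fun g => ?_
      simp only [Equiv.coe_mulLeft]
      rw [uu_smul_smul]
      congr 2
      apply Subtype.ext
      show σ g⁻¹ (b.1.toFun g) = σ (t * g)⁻¹ ((uu σ t * b.1).toFun (t * g))
      rw [uu_mul_toFun, ← AlgEquiv.mul_apply, ← map_mul]
      simp)
  obtain ⟨F, hF⟩ := hM.out N.subtype N.injective_subtype HL
  have hFe : ∀ a b : A, F (SGA.emb σ (a * b)) = SGA.emb σ a • F (SGA.emb σ b) := by
    intro a b
    rw [map_mul, ← smul_eq_mul, map_smul]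
  refine ⟨{ toFun := fun a => (F (SGA.emb σ a) : M), map_add' := ?_, map_smul' := ?_ }, ?_⟩
  · intro a b
    exact (congrArg F (map_add (SGA.emb σ) a b)).trans (F.map_add _ _)
  · intro a b
    exact hFe a b
  · intro x hx
    have hxN : SGA.emb σ x ∈ N := by
      intro g
      rw [emb_toFun]
      by_cases hg : g = 1
      · subst hg; simpa using hx
      · simp [hg]
    have h1 : F (SGA.emb σ x) = H ⟨_, hxN⟩ := hF ⟨_, hxN⟩
    show F (SGA.emb σ x) = h' ⟨x, hx⟩
    rw [h1, hH, Finset.sum_eq_single 1]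
    · rw [uu_one, one_smul]
      congr 1
      apply Subtype.ext
      show σ 1⁻¹ ((SGA.emb σ x).toFun 1) = x
      rw [emb_toFun]; simp
    · intro g _ hg
      have : (⟨_, hxN g⟩ : I) = 0 := by
        apply Subtype.ext
        show σ g⁻¹ ((SGA.emb σ x).toFun g) = 0
        rw [emb_toFun]; simp [hg]
      show uu σ g • h' ⟨_, hxN g⟩ = 0
      rw [this, map_zero, smul_zero]
    · simp

lemma inj_res_self (σ : G →* (A ≃ₐ[k] A)) :
    Module.Injective A (Res (SGA.emb σ) (SGA σ)) ↔ Module.Injective A A := by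
  constructor
  · intro h
    have hB := Module.Baer.of_equiv (resEquiv σ) (Module.Baer.of_injective h)
    apply Module.Baer.injective
    intro I g
    obtain ⟨F, hF⟩ := hB I ((LinearMap.single A (fun _ : G => A) 1).comp g)
    refine ⟨(LinearMap.proj 1).comp F, fun x hx => ?_⟩
    have := hF x hx
    simp [this]
  · intro h
    have : Module.Injective A (G → A) := inferInstance
    exact (Module.Baer.of_equiv (resEquiv σ).symm (Module.Baer.of_injective this)).injective

end SkewPart

lemma exists_eps {k : Type} [CommRing k] {A : Type} [Ring A] [Algebra k A]
    {G : Type} [Group G] [Fintype G] (σ : G →* (A ≃ₐ[k] A)) {n : ℕ} (e : Fin n → A)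
    (hE : IsCompletePrimitiveOrthogonalSystem A e)
    (hclosed : ∀ (g : G) (i : Fin n), ∃ j : Fin n, σ g (e i) = e j)
    (hfree : ∀ (g : G), g ≠ 1 → ∀ i : Fin n, σ g (e i) ≠ e i) :
    ∃ s : Finset (Fin n), ∑ g, σ g (∑ i ∈ s, e i) = 1 := by
  have hinj : Function.Injective e := by
    intro i j hij
    by_contra hne
    have h1 := hE.2.1 i j hne
    rw [← hij, (hE.1 i).1] at h1
    exact (hE.1 i).2.1 h1
  have hmul : ∀ g h (a : A), σ g (σ h a) = σ (g * h) a := by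
    intro g h a; rw [map_mul]; rfl
  let r : Setoid (Fin n) :=
    { r := fun i j => ∃ g, σ g (e i) = e j
      iseqv := ⟨fun i => ⟨1, by simp⟩, fun {i j} ⟨g, hg⟩ => ⟨g⁻¹, by rw [← hg, hmul]; simp⟩,
        fun {i j l} ⟨g, hg⟩ ⟨h, hh⟩ => ⟨h * g, by rw [← hmul, hg, hh]⟩⟩ }
  choose act hact using hclosed
  let s : Finset (Fin n) := Finset.univ.image (fun q : Quotient r => q.out)
  refine ⟨s, ?_⟩
  have h1 : ∑ i ∈ s, e i = ∑ q : Quotient r, e q.out :=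
    Finset.sum_image (fun a _ b _ hab => Quotient.out_injective hab)
  rw [h1, ← hE.2.2]
  simp only [map_sum]
  rw [← Fintype.sum_prod_type']
  refine Fintype.sum_bijective (fun x : G × Quotient r => act x.1 x.2.out) ⟨?_, ?_⟩ _ _
    (fun x => hact _ _)
  · rintro ⟨g, q⟩ ⟨h, q'⟩ hgh
    have h2 : σ g (e q.out) = σ h (e q'.out) := by rw [hact, hact]; exact congrArg e hgh
    have h3 : σ (h⁻¹ * g) (e q.out) = e q'.out := by rw [← hmul, h2, hmul]; simp
    have hq : q = q' := by
      rw [← q.out_eq, ← q'.out_eq]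
      exact Quotient.sound ⟨_, h3⟩
    subst hq
    have : h⁻¹ * g = 1 := by
      by_contra hne
      exact hfree _ hne _ h3
    rw [inv_mul_eq_one] at this
    rw [this]
  · intro j
    have : r.r (Quotient.mk r j).out j := Quotient.exact (Quotient.out_eq _)
    obtain ⟨g, hg⟩ := this
    exact ⟨(g, Quotient.mk r j), hinj (by rw [← hact]; exact hg)⟩

/-- Let `S` be a finite `p`-group (`p = char k`) acting on `Λ`, with a
complete set `E` of primitive orthogonal idempotents closed under the action of `S` on which
`S` acts freely. Then a finitely generated `ΛS`-module is projective (resp. injective) iff its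
restriction to `Λ` is projective (resp. injective); in particular `ΛS` is self-injective iff
`Λ` is self-injective. -/
theorem skew_group_algebra_projective_injective_restriction
    (k : Type) [Field k] [IsAlgClosed k] (p : ℕ) [CharP k p]
    (Λ : Type) [Ring Λ] [Algebra k Λ] [FiniteDimensional k Λ]
    (hconn : IsConnectedRing Λ) (hbasic : IsBasicRing Λ)
    (S : Type) [Group S] [Fintype S] (hp : IsPGroup p S)
    (σ : S →* (Λ ≃ₐ[k] Λ))
    (n : ℕ) (e : Fin n → Λ)
    (hE : IsCompletePrimitiveOrthogonalSystem Λ e)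
    (hclosed : ∀ (g : S) (i : Fin n), ∃ j : Fin n, σ g (e i) = e j)
    (hfree : ∀ (g : S), g ≠ 1 → ∀ i : Fin n, σ g (e i) ≠ e i) :
    (∀ (M : Type) [AddCommGroup M] [Module (SGA σ) M], Module.Finite (SGA σ) M →
      ((Module.Projective (SGA σ) M ↔ Module.Projective Λ (Res (SGA.emb σ) M)) ∧
        (Module.Injective (SGA σ) M ↔ Module.Injective Λ (Res (SGA.emb σ) M)))) ∧
    (Module.Injective (SGA σ) (SGA σ) ↔ Module.Injective Λ Λ) := by
  obtain ⟨s, hs⟩ := exists_eps σ e hE hclosed hfree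
  have hidem : (∑ i ∈ s, e i) * (∑ i ∈ s, e i) = ∑ i ∈ s, e i := by
    rw [Finset.sum_mul]
    refine Finset.sum_congr rfl fun i hi => ?_
    rw [Finset.mul_sum, Finset.sum_eq_single i (fun j _ hj => hE.2.1 i j hj.symm)
      (fun h => absurd hi h)]
    exact (hE.1 i).1
  have hc : ∀ g a, σ g (∑ i ∈ s, e i) * a - a * σ g (∑ i ∈ s, e i) ∈ Ring.jacobson Λ := by
    intro g a
    exact aux_comm (k := k) hbasic _ (by rw [← map_mul, hidem]) a
  have hJσ : ∀ g, ∀ c ∈ Ring.jacobson Λ, σ g c ∈ Ring.jacobson Λ := by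
    intro g c hc
    have hsur : RingHomSurjective ((σ g : Λ ≃ₐ[k] Λ) : Λ →+* Λ) := ⟨(σ g).surjective⟩
    exact Ring.le_comap_jacobson ((σ g : Λ ≃ₐ[k] Λ) : Λ →+* Λ) hc
  have hJr : ∀ c ∈ Ring.jacobson Λ, ∀ a, c * a ∈ Ring.jacobson Λ := by
    intro c hc a
    exact Ideal.mul_mem_right a _ hc
  have hart : IsArtinianRing Λ := isArtinian_of_tower k inferInstance
  obtain ⟨N, hN⟩ := IsSemiprimaryRing.isNilpotent (R := Λ)
  have hNc : ∀ c ∈ Ring.jacobson Λ ^ N, c = 0 := by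
    intro c hc
    rw [hN] at hc
    exact hc
  have hinj : ∀ (M : Type) [AddCommGroup M] [Module (SGA σ) M],
      (Module.Injective (SGA σ) M ↔ Module.Injective Λ (Res (SGA.emb σ) M)) := by
    intro M _ _
    refine ⟨inj_res M, fun h => ⟨fun X Y _ _ _ _ i hi g => ?_⟩⟩
    refine ext_inj hs hc hJσ hJr M h N X Y i g hi fun y c hc => ⟨0, ?_⟩
    rw [hNc c hc, map_zero, zero_smul, map_zero]
  refine ⟨fun M _ _ _ => ⟨⟨proj_res M, fun h => ?_⟩, hinj M⟩, ?_⟩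
  · refine Module.Projective.of_lifting_property'' fun f hf => ?_
    obtain ⟨l, hl⟩ := lift_proj hs hc hJσ hJr M h N (M →₀ SGA σ) M f LinearMap.id hf (by
      intro x _ c hc
      rw [hNc c hc, map_zero, zero_smul])
    exact ⟨l, LinearMap.ext hl⟩
  · exact (hinj (SGA σ)).trans (inj_res_self σ)
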